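/- Let L ≥ 1, let M be a symmetric n×n matrix with ±1 entries, let λ > 0, and let A_1,…,A_m,B_1,…,B_m be complement-disjoint subsets of {1,…,n} of size n − L such that |per M[A_ℓ,B_ℓ]| ≥ λ for all ℓ = 1,…,m. Then there exist quadruples (A*_ℓ, B*_ℓ, i_ℓ, j_ℓ) for ℓ = 1,…,m such that: (1) A*_ℓ, B*_ℓ ⊆ {1,…,n} with |A*_ℓ| = |B*_ℓ| = n − L + 1, and i_ℓ, j_ℓ ∈ A*_ℓ ∩ B*_ℓ with i_ℓ ≠ j_ℓ; (2) the 2m elements i_1, j_1, …, i_m, j_m of {1,…,n} are distinct; (3) the sets A*_1, B*_1, …, A*_m, B*_m are complement-disjoint in {1,…,n}; (4) for each ℓ, |per M[A*_ℓ,B*_ℓ]^{(i_ℓ,j_ℓ)} + per M[A*_ℓ,B*_ℓ]^{(j_ℓ,i_ℓ)}| ≥ λ/2 (equivalently, viewing per M'[A*_ℓ ∪ {n+1}, B*_ℓ ∪ {n+1}] as a polynomial in the entries x_1,…,x_n of a new symmetric row and column appended to M, the coefficient of x_{i_ℓ}x_{j_ℓ} has absolute value at least λ/2). -/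

import Mathlib

/-!
For a single pair `(A, B)` let `U` be the disjoint union of `Aᶜ` and `Bᶜ`, and for `X ⊆ U` put
`f X = per M[Xᶜ, (U \ X)ᶜ]`, so that `f Aᶜ = per M[A, B]`. If `Z ⊆ U` has one element fewer than
`Aᶜ` and `a ≠ b` lie in `U \ Z`, then `A* = Zᶜ`, `B* = (U \ (Z ∪ {a, b}))ᶜ`, `i = a`, `j = b`
satisfies the size and disjointness requirements, and the sum of permanents it produces is
`f (Z ∪ {a}) + f (Z ∪ {b})`.

Hence it suffices to find `Z`, `a`, `b` making this sum large. If `Aᶜ = {a}` and `Bᶜ = {b}`, then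
`f {a} = f {b}` by symmetry of `M`. Otherwise write `Aᶜ = Z ∪ {a}` and take distinct `b, c ∈ Bᶜ`:
for the values `x, y, z` of `f` at `Z ∪ {a}`, `Z ∪ {b}`, `Z ∪ {c}` we have
`2 x = (x + y) + (x + z) - (y + z)`, so one of the three sums is at least `2 |x| / 3` in absolute
value.

Everything chosen for the pair `(A_ℓ, B_ℓ)` stays inside its own `U`, and these are disjoint for
different `ℓ`, so the choices do not interfere.
-/

open Finset

/-- The real number (`1` or `-1`) associated to a Boolean: a Rademacher value. -/
noncomputable def rad (b : Bool) : ℝ := if b then 1 else -1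

/-- The permanent of the submatrix of `M` with row set `A` and column set `B`,
defined as a sum over all bijections between `A` and `B` (it equals `0` if
`A.card ≠ B.card`). Since the permanent is invariant under row and column
permutations, this faithfully represents `per M[A,B]`. -/
noncomputable def permOn {m n : ℕ} (M : Matrix (Fin m) (Fin n) ℝ)
    (A : Finset (Fin m)) (B : Finset (Fin n)) : ℝ :=
  ∑ σ : {x // x ∈ A} ≃ {y // y ∈ B}, ∏ i : {x // x ∈ A}, M i.1 (σ i).1

/-- A family of subsets of `{1,…,n}` is complement-disjoint if the complements of its
members are pairwise disjoint. -/
def cdisj {n : ℕ} {ι : Type*} (S : ι → Finset (Fin n)) : Prop :=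
  ∀ i j : ι, i ≠ j → Disjoint (S i)ᶜ (S j)ᶜ

theorem permOn_transpose {m n : ℕ} (M : Matrix (Fin m) (Fin n) ℝ)
    (A : Finset (Fin m)) (B : Finset (Fin n)) : permOn M.transpose B A = permOn M A B :=
  Fintype.sum_equiv ⟨Equiv.symm, Equiv.symm, fun _ => rfl, fun _ => rfl⟩ _ _ fun σ =>
    Fintype.prod_equiv σ _ _ fun x => by simp

theorem permOn_comm_of_isSymm {n : ℕ} {M : Matrix (Fin n) (Fin n) ℝ} (hM : M.IsSymm)
    (A B : Finset (Fin n)) : permOn M A B = permOn M B A := by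
  rw [← permOn_transpose, hM.eq]

theorem cdisj_sumElim_iff {n : ℕ} {ι : Type*} {A B : ι → Finset (Fin n)} :
    cdisj (Sum.elim A B) ↔ (∀ ℓ, Disjoint (A ℓ)ᶜ (B ℓ)ᶜ) ∧
      Pairwise fun k ℓ => Disjoint ((A k)ᶜ ∪ (B k)ᶜ) ((A ℓ)ᶜ ∪ (B ℓ)ᶜ) := by
  simp only [disjoint_union_left, disjoint_union_right]
  constructor
  · intro h
    exact ⟨fun ℓ => h (.inl ℓ) (.inr ℓ) Sum.inl_ne_inr, fun k ℓ hkl =>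
      ⟨⟨h (.inl k) (.inl ℓ) (Sum.inl_injective.ne hkl), h (.inr k) (.inl ℓ) Sum.inr_ne_inl⟩,
        h (.inl k) (.inr ℓ) Sum.inl_ne_inr, h (.inr k) (.inr ℓ) (Sum.inr_injective.ne hkl)⟩⟩
  · rintro ⟨hAB, hU⟩ (k | k) (ℓ | ℓ) hkl
    · exact (hU (ne_of_apply_ne Sum.inl hkl)).1.1
    · rcases eq_or_ne k ℓ with rfl | hne
      exacts [hAB k, (hU hne).2.1]
    · rcases eq_or_ne k ℓ with rfl | hne
      exacts [(hAB k).symm, (hU hne).1.2]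
    · exact (hU (ne_of_apply_ne Sum.inr hkl)).2.2

theorem injective_sumElim_of_pairwise_disjoint {ι α : Type*} {U : ι → Finset α}
    (hU : Pairwise fun k ℓ => Disjoint (U k) (U ℓ)) {i j : ι → α}
    (hi : ∀ ℓ, i ℓ ∈ U ℓ) (hj : ∀ ℓ, j ℓ ∈ U ℓ) (hij : ∀ ℓ, i ℓ ≠ j ℓ) :
    Function.Injective (Sum.elim i j) := by
  have index_eq {k ℓ : ι} {x y : α} (hx : x ∈ U k) (hy : y ∈ U ℓ) (hxy : x = y) : k = ℓ :=
    hU.eq fun h => disjoint_left.1 h hx (hxy ▸ hy)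
  refine Function.Injective.sumElim (fun k ℓ h => index_eq (hi k) (hi ℓ) h)
    (fun k ℓ h => index_eq (hj k) (hj ℓ) h) fun k ℓ h => ?_
  obtain rfl := index_eq (hi k) (hj ℓ) h
  exact hij k h

theorem two_mul_abs_le_abs_add {R : Type*} [CommRing R] [LinearOrder R] [IsStrictOrderedRing R]
    (x y z : R) : 2 * |x| ≤ |x + y| + |x + z| + |y + z| :=
  calc 2 * |x| = |(x + y) + (x + z) - (y + z)| := by rw [← abs_two, ← abs_mul]; congr 1; ring
    _ ≤ |(x + y) + (x + z)| + |y + z| := abs_sub _ _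
    _ ≤ |x + y| + |x + z| + |y + z| := by gcongr; exact abs_add_le _ _

theorem exists_exchange {α R : Type*} [DecidableEq α]
    [Field R] [LinearOrder R] [IsStrictOrderedRing R] (f : Finset α → R) {X Y : Finset α}
    (hXY : Disjoint X Y) (hX : X.Nonempty) (hcard : X.card = Y.card) (hf : f Y = f X) :
    ∃ Z ⊆ X, Z.card + 1 = X.card ∧ ∃ a ∈ (X ∪ Y) \ Z, ∃ b ∈ (X ∪ Y) \ Z, a ≠ b ∧
      2 / 3 * |f X| ≤ |f (insert a Z) + f (insert b Z)| := by
  obtain hone | hlt := (Nat.one_le_iff_ne_zero.2 hX.card_ne_zero).eq_or_lt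
  · obtain ⟨a, rfl⟩ := card_eq_one.1 hone.symm
    obtain ⟨b, rfl⟩ := card_eq_one.1 (hcard.symm.trans hone.symm)
    refine ⟨∅, empty_subset _, rfl, a, by simp, b, by simp, by simpa using hXY, ?_⟩
    rw [insert_empty_eq, insert_empty_eq, hf, ← two_mul, abs_mul, abs_two]
    gcongr
    norm_num
  · obtain ⟨a, ha⟩ := hX
    obtain ⟨b, hb, c, hc, hbc⟩ := one_lt_card.1 (hcard ▸ hlt)
    have mem_of_mem_right {y : α} (hy : y ∈ Y) : y ∈ (X ∪ Y) \ X.erase a :=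
      mem_sdiff.2 ⟨mem_union_right _ hy, fun h => disjoint_right.1 hXY hy (mem_of_mem_erase h)⟩
    have haU : a ∈ (X ∪ Y) \ X.erase a := by simp [ha]
    have hne {y : α} (hy : y ∈ Y) : a ≠ y := disjoint_iff_ne.1 hXY a ha y hy
    refine ⟨X.erase a, erase_subset _ _, card_erase_add_one ha, ?_⟩
    have htri := two_mul_abs_le_abs_add (f X) (f (insert b (X.erase a))) (f (insert c (X.erase a)))
    by_contra! hsmall
    have hsmall_ab := hsmall a haU b (mem_of_mem_right hb) (hne hb)
    have hsmall_ac := hsmall a haU c (mem_of_mem_right hc) (hne hc)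
    have hsmall_bc := hsmall b (mem_of_mem_right hb) c (mem_of_mem_right hc) hbc
    rw [insert_erase ha] at hsmall_ab hsmall_ac
    linarith

/-- The permanent of `M` with rows `X` and columns `U \ X` removed. For `X ⊆ U` this is the
permanent attached to the splitting of `U` into `X` and `U \ X`; it is the function `f` of the
exchange argument. -/
noncomputable def splitPerm {n : ℕ} (M : Matrix (Fin n) (Fin n) ℝ) (U X : Finset (Fin n)) : ℝ :=
  permOn M Xᶜ (U \ X)ᶜ

section

variable {n : ℕ} (M : Matrix (Fin n) (Fin n) ℝ)

theorem splitPerm_compl_left {A B : Finset (Fin n)} (h : Disjoint Aᶜ Bᶜ) :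
    splitPerm M (Aᶜ ∪ Bᶜ) Aᶜ = permOn M A B := by
  rw [splitPerm, union_sdiff_cancel_left h, compl_compl, compl_compl]

theorem splitPerm_compl_right {A B : Finset (Fin n)} (h : Disjoint Aᶜ Bᶜ) :
    splitPerm M (Aᶜ ∪ Bᶜ) Bᶜ = permOn M B A := by
  rw [union_comm, splitPerm_compl_left M h.symm]

theorem splitPerm_insert {U Z : Finset (Fin n)} {a b : Fin n} (hb : b ∈ U \ Z) (hab : a ≠ b) :
    splitPerm M U (insert a Z) =
      permOn M (Zᶜ.erase a) ((((U \ Z).erase a).erase b)ᶜ.erase b) := by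
  rw [splitPerm, sdiff_insert, ← compl_insert, ← compl_insert,
    insert_erase (mem_erase.2 ⟨hab.symm, hb⟩)]

end

/-- `(A', B', i, j)` is a quadruple constructed from the single pair `(A, B)`. The indices and the
complements of `A'` and `B'` are confined to `Aᶜ ∪ Bᶜ`, so that quadruples constructed from
different pairs of a complement-disjoint family do not interact. -/
structure IsQuadruple {n : ℕ} (M : Matrix (Fin n) (Fin n) ℝ) (A B A' B' : Finset (Fin n))
    (i j : Fin n) : Prop where
  card_left : A'.card = A.card + 1
  card_right : B'.card = B.card + 1
  fst_mem : i ∈ A' ∩ B'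
  snd_mem : j ∈ A' ∩ B'
  fst_ne_snd : i ≠ j
  disjoint_compl : Disjoint A'ᶜ B'ᶜ
  compl_subset : A'ᶜ ∪ B'ᶜ ⊆ Aᶜ ∪ Bᶜ
  fst_mem_compl : i ∈ Aᶜ ∪ Bᶜ
  snd_mem_compl : j ∈ Aᶜ ∪ Bᶜ
  le_abs_add : 2 / 3 * |permOn M A B| ≤
    |permOn M (A'.erase i) (B'.erase j) + permOn M (A'.erase j) (B'.erase i)|

theorem isQuadruple_of_exchange {n : ℕ} {M : Matrix (Fin n) (Fin n) ℝ} {A B Z : Finset (Fin n)}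
    (hAB : Disjoint Aᶜ Bᶜ) (hZ : Z ⊆ Aᶜ ∪ Bᶜ) (hZcard : Z.card + 1 = Aᶜ.card) {a b : Fin n}
    (ha : a ∈ (Aᶜ ∪ Bᶜ) \ Z) (hb : b ∈ (Aᶜ ∪ Bᶜ) \ Z) (hab : a ≠ b)
    (hle : 2 / 3 * |permOn M A B| ≤
      |splitPerm M (Aᶜ ∪ Bᶜ) (insert a Z) + splitPerm M (Aᶜ ∪ Bᶜ) (insert b Z)|) :
    IsQuadruple M A B Zᶜ (((((Aᶜ ∪ Bᶜ) \ Z).erase a).erase b)ᶜ) a b := by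
  set W := (((Aᶜ ∪ Bᶜ) \ Z).erase a).erase b with hW
  have hWsub : W ⊆ (Aᶜ ∪ Bᶜ) \ Z := (erase_subset _ _).trans (erase_subset _ _)
  have hWcard : W.card + 1 + 1 = ((Aᶜ ∪ Bᶜ) \ Z).card := by
    rw [card_erase_add_one (mem_erase.2 ⟨hab.symm, hb⟩), card_erase_add_one ha]
  have hUcard : ((Aᶜ ∪ Bᶜ) \ Z).card + Z.card = Aᶜ.card + Bᶜ.card := by
    rw [card_sdiff_add_card_eq_card hZ, card_union_of_disjoint hAB]
  have hA := card_add_card_compl A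
  have hB := card_add_card_compl B
  have hZc := card_add_card_compl Z
  have hWc := card_add_card_compl W
  exact
    { card_left := by omega
      card_right := by omega
      fst_mem := by simpa [hW] using (mem_sdiff.1 ha).2
      snd_mem := by simpa [hW] using (mem_sdiff.1 hb).2
      fst_ne_snd := hab
      disjoint_compl := by
        simpa only [compl_compl] using disjoint_sdiff.mono_right hWsub
      compl_subset := by
        simpa only [compl_compl] using union_subset hZ (hWsub.trans sdiff_subset)
      fst_mem_compl := (mem_sdiff.1 ha).1
      snd_mem_compl := (mem_sdiff.1 hb).1
      le_abs_add := by
        rwa [splitPerm_insert M hb hab, splitPerm_insert M ha hab.symm,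
          erase_right_comm (a := b)] at hle }

theorem exists_isQuadruple {n : ℕ} {M : Matrix (Fin n) (Fin n) ℝ} (hM : M.IsSymm)
    {A B : Finset (Fin n)} (hAB : Disjoint Aᶜ Bᶜ) (hcard : A.card = B.card) (hA : A ≠ univ) :
    ∃ A' B' i j, IsQuadruple M A B A' B' i j := by
  have hAne : Aᶜ.Nonempty := nonempty_iff_ne_empty.2 ((compl_eq_empty_iff A).not.2 hA)
  have hsplit : splitPerm M (Aᶜ ∪ Bᶜ) Bᶜ = splitPerm M (Aᶜ ∪ Bᶜ) Aᶜ := by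
    rw [splitPerm_compl_left M hAB, splitPerm_compl_right M hAB, permOn_comm_of_isSymm hM]
  obtain ⟨Z, hZ, hZcard, a, ha, b, hb, hab, hle⟩ :=
    exists_exchange (splitPerm M (Aᶜ ∪ Bᶜ)) hAB hAne (by rw [card_compl, card_compl, hcard]) hsplit
  rw [splitPerm_compl_left M hAB] at hle
  exact ⟨_, _, a, b, isQuadruple_of_exchange hAB (hZ.trans subset_union_left) hZcard
    ha hb hab hle⟩

theorem quadruple_construction_general {n : ℕ} {ι : Type*} {M : Matrix (Fin n) (Fin n) ℝ}
    (hM : M.IsSymm) {A B : ι → Finset (Fin n)} (hcd : cdisj (Sum.elim A B))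
    (hcard : ∀ ℓ, (A ℓ).card = (B ℓ).card) (hA : ∀ ℓ, A ℓ ≠ univ) :
    ∃ (A' B' : ι → Finset (Fin n)) (i j : ι → Fin n),
      (∀ ℓ, (A' ℓ).card = (A ℓ).card + 1) ∧ (∀ ℓ, (B' ℓ).card = (B ℓ).card + 1) ∧
      (∀ ℓ, i ℓ ∈ A' ℓ ∩ B' ℓ) ∧ (∀ ℓ, j ℓ ∈ A' ℓ ∩ B' ℓ) ∧ (∀ ℓ, i ℓ ≠ j ℓ) ∧
      Function.Injective (Sum.elim i j) ∧
      cdisj (Sum.elim A' B') ∧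
      (∀ ℓ, 2 / 3 * |permOn M (A ℓ) (B ℓ)| ≤
        |permOn M ((A' ℓ).erase (i ℓ)) ((B' ℓ).erase (j ℓ)) +
          permOn M ((A' ℓ).erase (j ℓ)) ((B' ℓ).erase (i ℓ))|) := by
  obtain ⟨hAB, hU⟩ := cdisj_sumElim_iff.1 hcd
  choose A' B' i j hq using fun ℓ => exists_isQuadruple hM (hAB ℓ) (hcard ℓ) (hA ℓ)
  have hinj : Function.Injective (Sum.elim i j) :=
    injective_sumElim_of_pairwise_disjoint hU (fun ℓ => (hq ℓ).fst_mem_compl)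
      (fun ℓ => (hq ℓ).snd_mem_compl) fun ℓ => (hq ℓ).fst_ne_snd
  have hcd' : cdisj (Sum.elim A' B') :=
    cdisj_sumElim_iff.2 ⟨fun ℓ => (hq ℓ).disjoint_compl, fun k ℓ hkl =>
      (hU hkl).mono (hq k).compl_subset (hq ℓ).compl_subset⟩
  exact ⟨A', B', i, j, fun ℓ => (hq ℓ).card_left, fun ℓ => (hq ℓ).card_right,
    fun ℓ => (hq ℓ).fst_mem, fun ℓ => (hq ℓ).snd_mem, fun ℓ => (hq ℓ).fst_ne_snd, hinj, hcd',
    fun ℓ => (hq ℓ).le_abs_add⟩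

/-- Construction of the quadruples `(A*_ℓ, B*_ℓ, i_ℓ, j_ℓ)`: given complement-disjoint
subsets `A_1, …, A_m, B_1, …, B_m` of `{1,…,n}` of size `n - L` (with `1 ≤ L < n`) such
that each `|per M[A_ℓ, B_ℓ]| ≥ λ` for a symmetric `±1` matrix `M`, there exist sets
`A*_ℓ, B*_ℓ` of size `n - L + 1` and distinct indices `i_ℓ, j_ℓ ∈ A*_ℓ ∩ B*_ℓ`, with all
`2m` indices distinct and the `2m` sets complement-disjoint, such that
`|per M[A*_ℓ,B*_ℓ]^{(i_ℓ,j_ℓ)} + per M[A*_ℓ,B*_ℓ]^{(j_ℓ,i_ℓ)}| ≥ λ/2` for every `ℓ`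
(here `per M[A,B]^{(i,j)} = per M[A \ {i}, B \ {j}]`). -/
theorem quadruple_construction (n m L : ℕ) (hL : 1 ≤ L) (hLn : L < n)
    (M : Matrix (Fin n) (Fin n) ℝ) (hsym : M.IsSymm)
    (hsign : ∀ i j, M i j = 1 ∨ M i j = -1) (lam : ℝ) (hlam : 0 < lam)
    (A B : Fin m → Finset (Fin n)) (hcd : cdisj (Sum.elim A B))
    (hA : ∀ ℓ, (A ℓ).card = n - L) (hB : ∀ ℓ, (B ℓ).card = n - L)
    (hheavy : ∀ ℓ, lam ≤ |permOn M (A ℓ) (B ℓ)|) :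
    ∃ (A' B' : Fin m → Finset (Fin n)) (i j : Fin m → Fin n),
      (∀ ℓ, (A' ℓ).card = n - L + 1) ∧ (∀ ℓ, (B' ℓ).card = n - L + 1) ∧
      (∀ ℓ, i ℓ ∈ A' ℓ ∩ B' ℓ) ∧ (∀ ℓ, j ℓ ∈ A' ℓ ∩ B' ℓ) ∧ (∀ ℓ, i ℓ ≠ j ℓ) ∧
      Function.Injective (Sum.elim i j) ∧
      cdisj (Sum.elim A' B') ∧
      (∀ ℓ, lam / 2 ≤
        |permOn M ((A' ℓ).erase (i ℓ)) ((B' ℓ).erase (j ℓ)) +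
          permOn M ((A' ℓ).erase (j ℓ)) ((B' ℓ).erase (i ℓ))|) := by
  have hne (ℓ : Fin m) : A ℓ ≠ univ := (card_lt_iff_ne_univ _).1 (by simp [hA ℓ]; omega)
  obtain ⟨A', B', i, j, hA', hB', hi, hj, hij, hinj, hcd', hle⟩ :=
    quadruple_construction_general hsym hcd (fun ℓ => (hA ℓ).trans (hB ℓ).symm) hne
  exact ⟨A', B', i, j, fun ℓ => hA ℓ ▸ hA' ℓ, fun ℓ => hB ℓ ▸ hB' ℓ, hi, hj, hij, hinj, hcd',
    fun ℓ => by linarith [hle ℓ, hheavy ℓ]⟩
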